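/- arXiv:2502.07510 — 2 statements merged into one kernel-verified Lean document; each statement's English description precedes it below -/
import Mathlib

section
/- Let 𝕏_i = (X_i, d_{X_i}, ξ_i), i = 1, 2, be mm-spaces and let (Z, d_Z) be a compact metric space such that for each i there exists an isometric embedding of supp ξ_i into Z. Then the infimum defining EW(𝕏₁, 𝕏₂) = inf over isometric embeddings I_i : supp ξ_i → Z of W₂(I₁_#ξ₁, I₂_#ξ₂) is attained, i.e., there exist isometric embeddings I₁, I₂ realizing the infimum. -/
/-!
The space of isometric embeddings of a compact metric space into `Z` is compact for uniform
convergence by Arzelà–Ascoli (`isCompact_isometries`), so it suffices that `W₂` of the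
pushforwards depends continuously on the pair of embeddings.

An isometric embedding `I` of a compact space is a measurable embedding, hence couplings of
`I₁_#ξ₁` and `I₂_#ξ₂` are exactly the pushforwards under `I₁ × I₂` of couplings `γ` of `ξ₁` and
`ξ₂` (`W2sq_map_eq`). The squared distance thus becomes an infimum, over a set of couplings that
does not depend on the embeddings, of `∫ d(I₁ x, I₂ y)² dγ`. Each of these functionals is Lipschitz
in `(I₁, I₂)` for the uniform distance, with a constant independent of `γ`, and therefore so is the
infimum (`continuous_pullCost`). A continuous function on a nonempty compact set attains its
minimum.
-/

open MeasureTheory Filter Topology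

noncomputable section

/-- The set of couplings (transport plans) between two measures. -/
def couplings {X Y : Type*} [MeasurableSpace X] [MeasurableSpace Y]
    (μ : Measure X) (ν : Measure Y) : Set (Measure (X × Y)) :=
  {π | π.map Prod.fst = μ ∧ π.map Prod.snd = ν}

/-- Squared Wasserstein-2 distance. -/
noncomputable def W2sq {Z : Type*} [MetricSpace Z] [MeasurableSpace Z]
    (μ ν : Measure Z) : ℝ :=
  ⨅ π : couplings μ ν, ∫ p : Z × Z, dist p.1 p.2 ^ 2 ∂(π.1)

/-- Wasserstein-2 distance. -/
noncomputable def W2 {Z : Type*} [MetricSpace Z] [MeasurableSpace Z]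
    (μ ν : Measure Z) : ℝ := Real.sqrt (W2sq μ ν)

/-- The Gromov--Wasserstein objective of a plan `γ`. -/
noncomputable def GWobj {X Y : Type*} [MetricSpace X] [MetricSpace Y]
    [MeasurableSpace X] [MeasurableSpace Y]
    (γ : Measure (X × Y)) : ℝ :=
  ∫ q : (X × Y) × (X × Y),
    (dist q.1.1 q.2.1 - dist q.1.2 q.2.2) ^ 2 ∂(γ.prod γ)

/-- Squared Gromov--Wasserstein distance between `(X, d_X, ξ)` and `(Y, d_Y, ν)`. -/
noncomputable def GWsq {X Y : Type*} [MetricSpace X] [MetricSpace Y]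
    [MeasurableSpace X] [MeasurableSpace Y]
    (ξ : Measure X) (ν : Measure Y) : ℝ :=
  ⨅ γ : couplings ξ ν, GWobj γ.1

/-- The support of a measure: points all of whose open neighborhoods have positive measure. -/
def msupport {X : Type*} [TopologicalSpace X] [MeasurableSpace X] (ξ : Measure X) : Set X :=
  {x | ∀ U : Set X, IsOpen U → x ∈ U → 0 < ξ U}

/-- Pushforward `I,#ξ` of `ξ` under a map defined on the support of `ξ`. -/
noncomputable def pushSupp {X Z : Type*} [MetricSpace X] [MetricSpace Z]
    [MeasurableSpace X] [MeasurableSpace Z]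
    (ξ : Measure X) (I : msupport ξ → Z) : Measure Z :=
  Measure.map I (Measure.comap Subtype.val ξ)

/-- The objective of the `EW_λ` problem evaluated at a plan `π` on `Z × Z`. -/
noncomputable def EWobj {X₁ X₂ Z : Type*} [MetricSpace X₁] [MetricSpace X₂] [MetricSpace Z]
    [MeasurableSpace X₁] [MeasurableSpace X₂] [MeasurableSpace Z]
    (lam : ℝ) (ξ₁ : Measure X₁) (ξ₂ : Measure X₂) (π : Measure (Z × Z)) : ℝ :=
  (∫ p : Z × Z, dist p.1 p.2 ^ 2 ∂π)
    + lam * (GWsq ξ₁ (π.map Prod.fst) + GWsq ξ₂ (π.map Prod.snd))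

/-- `EW_λ(𝕏₁, 𝕏₂)²`: infimum of the `EW_λ` objective over probability measures on `Z × Z`. -/
noncomputable def EWlamSq {X₁ X₂ : Type*} (Z : Type*) [MetricSpace X₁] [MetricSpace X₂] [MetricSpace Z]
    [MeasurableSpace X₁] [MeasurableSpace X₂] [MeasurableSpace Z]
    (lam : ℝ) (ξ₁ : Measure X₁) (ξ₂ : Measure X₂) : ℝ :=
  ⨅ π : {π : Measure (Z × Z) // IsProbabilityMeasure π}, EWobj lam ξ₁ ξ₂ π.1

/-- `EW(𝕏₁, 𝕏₂)²`: infimum over isometric embeddings of the supports into `Z`. -/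
noncomputable def EWsq {X₁ X₂ : Type*} (Z : Type*) [MetricSpace X₁] [MetricSpace X₂] [MetricSpace Z]
    [MeasurableSpace X₁] [MeasurableSpace X₂] [MeasurableSpace Z]
    (ξ₁ : Measure X₁) (ξ₂ : Measure X₂) : ℝ :=
  ⨅ (I₁ : {f : msupport ξ₁ → Z // Isometry f}) (I₂ : {f : msupport ξ₂ → Z // Isometry f}),
    W2sq (pushSupp ξ₁ I₁.1) (pushSupp ξ₂ I₂.1)

/-- Weak convergence of a sequence of measures. -/
def WeakConv {Z : Type*} [TopologicalSpace Z] [MeasurableSpace Z]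
    (μs : ℕ → Measure Z) (μ : Measure Z) : Prop :=
  ∀ φ : Z → ℝ, Continuous φ →
    Tendsto (fun n => ∫ z, φ z ∂(μs n)) atTop (nhds (∫ z, φ z ∂μ))


theorem isClosed_msupport {X : Type*} [TopologicalSpace X] [MeasurableSpace X] (ξ : Measure X) :
    IsClosed (msupport ξ) := by
  rw [← isOpen_compl_iff, isOpen_iff_forall_mem_open]
  intro x hx
  simp only [msupport, Set.mem_compl_iff, Set.mem_ofPred_eq, not_forall] at hx
  obtain ⟨U, hU, hxU, h0⟩ := hx
  exact ⟨U, fun y hy hys => h0 (hys U hU hy), hU, hxU⟩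

theorem isCompact_isometries {K Z : Type*} [MetricSpace K] [CompactSpace K] [MetricSpace Z]
    [CompactSpace Z] : IsCompact {f : C(K, Z) | Isometry f} := by
  apply ArzelaAscoli.isCompact_of_equicontinuous
  · apply IsClosed.isCompact
    have h : ContinuousMap.toFun '' {f : C(K, Z) | Isometry f}
        = ⋂ (x : K) (y : K), {f : K → Z | dist (f x) (f y) = dist x y} := by
      ext f
      simp only [Set.mem_image, Set.mem_ofPred_eq, Set.mem_iInter]
      constructor
      · rintro ⟨g, hg, rfl⟩ x y
        exact hg.dist_eq x y
      · intro hf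
        have hi : Isometry f := Isometry.of_dist_eq hf
        exact ⟨⟨f, hi.continuous⟩, hi, rfl⟩
    rw [h]
    exact isClosed_iInter fun x => isClosed_iInter fun y =>
      isClosed_eq ((continuous_apply x).dist (continuous_apply y)) continuous_const
  · intro x
    rw [Metric.equicontinuousAt_iff]
    intro ε hε
    refine ⟨ε, hε, fun y hy f => ?_⟩
    have hf : Isometry (f.1 : K → Z) := f.2
    exact (hf.dist_eq x y).trans_lt (by rwa [dist_comm])

/-- The quadratic transport cost between `μ.map p.1` and `ν.map p.2`, written as an
infimum over couplings of `μ` and `ν` themselves. -/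
def pullCost {K L Z : Type*} [MetricSpace K] [MetricSpace L] [MetricSpace Z]
    [MeasurableSpace K] [MeasurableSpace L] (μ : Measure K) (ν : Measure L)
    (p : C(K, Z) × C(L, Z)) : ℝ :=
  ⨅ γ : couplings μ ν, ∫ q : K × L, dist (p.1 q.1) (p.2 q.2) ^ 2 ∂(γ.1)

theorem isFiniteMeasure_coupling {K L : Type*} [MeasurableSpace K] [MeasurableSpace L]
    {μ : Measure K} {ν : Measure L} [IsFiniteMeasure μ] (γ : couplings μ ν) :
    IsFiniteMeasure γ.1 := by
  refine ⟨?_⟩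
  have h : μ Set.univ < ⊤ := measure_lt_top _ _
  rwa [← γ.2.1, Measure.map_apply measurable_fst MeasurableSet.univ, Set.preimage_univ] at h

theorem continuous_pullCost {K L Z : Type*} [MetricSpace K] [CompactSpace K]
    [MetricSpace L] [CompactSpace L] [MetricSpace Z] [CompactSpace Z]
    [MeasurableSpace K] [BorelSpace K] [MeasurableSpace L] [BorelSpace L]
    (μ : Measure K) (ν : Measure L) [IsFiniteMeasure μ] :
    Continuous (pullCost (Z := Z) μ ν) := by
  rcases isEmpty_or_nonempty (couplings μ ν) with he | hne
  · have h : pullCost (Z := Z) μ ν = fun _ => 0 := by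
      ext p
      exact Real.iInf_of_isEmpty _
    rw [h]
    exact continuous_const
  set D : ℝ := Metric.diam (Set.univ : Set Z) with hD
  have hD0 : 0 ≤ D := Metric.diam_nonneg
  have hle : ∀ a b : Z, dist a b ≤ D := fun a b =>
    Metric.dist_le_diam_of_mem isCompact_univ.isBounded (Set.mem_univ _) (Set.mem_univ _)
  -- Every coupling has the total mass `M` of `μ`, which makes the constant uniform in `γ`.
  set M : ℝ := μ.real Set.univ with hM
  have hM0 : 0 ≤ M := measureReal_nonneg
  have hK : 0 ≤ 4 * D * M := by positivity
  refine (LipschitzWith.of_le_add_mul (K := ⟨4 * D * M, hK⟩) ?_).continuous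
  intro p p'
  rw [← sub_le_iff_le_add]
  refine le_ciInf fun γ => ?_
  rw [sub_le_iff_le_add]
  have hfin : IsFiniteMeasure γ.1 := isFiniteMeasure_coupling γ
  have hbdd : BddBelow (Set.range fun γ : couplings μ ν =>
      ∫ q : K × L, dist (p.1 q.1) (p.2 q.2) ^ 2 ∂(γ.1)) :=
    ⟨0, by rintro _ ⟨γ, rfl⟩; exact integral_nonneg fun q => sq_nonneg _⟩
  refine (ciInf_le hbdd γ).trans ?_
  have hint : ∀ r : C(K, Z) × C(L, Z),
      Integrable (fun q : K × L => dist (r.1 q.1) (r.2 q.2) ^ 2) γ.1 := fun r =>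
    (by fun_prop : Continuous fun q : K × L =>
      dist (r.1 q.1) (r.2 q.2) ^ 2).integrable_of_hasCompactSupport
        (HasCompactSupport.of_compactSpace _)
  have hmass : γ.1.real Set.univ = M := by
    have h := map_measureReal_apply (μ := γ.1) measurable_fst MeasurableSet.univ
    rw [γ.2.1, Set.preimage_univ] at h
    exact h.symm
  have key : ∀ q : K × L, dist (p.1 q.1) (p.2 q.2) ^ 2
      ≤ dist (p'.1 q.1) (p'.2 q.2) ^ 2 + 4 * D * dist p p' := by
    intro q
    have h1 : dist (p.1 q.1) (p'.1 q.1) ≤ dist p p' :=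
      (ContinuousMap.dist_apply_le_dist _).trans (le_max_left _ _)
    have h2 : dist (p'.2 q.2) (p.2 q.2) ≤ dist p p' := by
      rw [dist_comm]
      exact (ContinuousMap.dist_apply_le_dist _).trans (le_max_right _ _)
    have h3 := dist_triangle4 (p.1 q.1) (p'.1 q.1) (p'.2 q.2) (p.2 q.2)
    have ha := hle (p.1 q.1) (p.2 q.2)
    have hb := hle (p'.1 q.1) (p'.2 q.2)
    have ha0 := dist_nonneg (x := p.1 q.1) (y := p.2 q.2)
    have hb0 := dist_nonneg (x := p'.1 q.1) (y := p'.2 q.2)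
    have he0 := dist_nonneg (x := p) (y := p')
    generalize dist (p.1 q.1) (p.2 q.2) = a at *
    generalize dist (p'.1 q.1) (p'.2 q.2) = b at *
    generalize dist p p' = e at *
    have h4 : a - b ≤ 2 * e := by linarith
    nlinarith [mul_le_mul_of_nonneg_right h4 (add_nonneg ha0 hb0),
      mul_le_mul_of_nonneg_left (add_le_add ha hb) he0]
  calc ∫ q : K × L, dist (p.1 q.1) (p.2 q.2) ^ 2 ∂(γ.1)
      ≤ ∫ q : K × L, (dist (p'.1 q.1) (p'.2 q.2) ^ 2 + 4 * D * dist p p') ∂(γ.1) :=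
        integral_mono (hint p) ((hint p').add (integrable_const _)) key
    _ = (∫ q : K × L, dist (p'.1 q.1) (p'.2 q.2) ^ 2 ∂(γ.1)) + 4 * D * M * dist p p' := by
        rw [integral_add (hint p') (integrable_const _), integral_const, hmass, smul_eq_mul]
        ring

/-- Couplings of pushforwards under isometric embeddings of compact spaces are exactly pushforwards
of couplings: surjectivity holds because a coupling of the pushforwards is concentrated on the
product of the ranges, so it can be pulled back. -/
theorem W2sq_map_eq {K L Z : Type*} [MetricSpace K] [CompactSpace K]
    [MetricSpace L] [CompactSpace L] [MetricSpace Z] [CompactSpace Z]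
    [MeasurableSpace K] [BorelSpace K] [MeasurableSpace L] [BorelSpace L]
    [MeasurableSpace Z] [BorelSpace Z] (μ : Measure K) (ν : Measure L)
    (f : C(K, Z)) (g : C(L, Z)) (hf : Isometry f) (hg : Isometry g) :
    W2sq (μ.map f) (ν.map g) = pullCost μ ν (f, g) := by
  have hfm : MeasurableEmbedding f := hf.isClosedEmbedding.measurableEmbedding
  have hgm : MeasurableEmbedding g := hg.isClosedEmbedding.measurableEmbedding
  have hfg : MeasurableEmbedding (Prod.map f g) := hfm.prodMap hgm
  have hmem : ∀ γ ∈ couplings μ ν, γ.map (Prod.map f g) ∈ couplings (μ.map f) (ν.map g) := by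
    rintro γ ⟨hγ1, hγ2⟩
    constructor
    · rw [← hγ1, Measure.map_map measurable_fst hfg.measurable,
        Measure.map_map hfm.measurable measurable_fst]
      rfl
    · rw [← hγ2, Measure.map_map measurable_snd hfg.measurable,
        Measure.map_map hgm.measurable measurable_snd]
      rfl
  unfold W2sq pullCost
  symm
  refine Function.Surjective.iInf_congr
    (fun γ : couplings μ ν => (⟨γ.1.map (Prod.map f g), hmem γ.1 γ.2⟩ :
      couplings (μ.map f) (ν.map g))) ?_ ?_
  · rintro ⟨π, hπ1, hπ2⟩
    have hae1 : ∀ᵐ p ∂π, p.1 ∈ Set.range f := by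
      refine ae_of_ae_map (p := fun z => z ∈ Set.range f) measurable_fst.aemeasurable ?_
      rw [hπ1, hfm.ae_map_iff]
      exact ae_of_all _ fun x => ⟨x, rfl⟩
    have hae2 : ∀ᵐ p ∂π, p.2 ∈ Set.range g := by
      refine ae_of_ae_map (p := fun z => z ∈ Set.range g) measurable_snd.aemeasurable ?_
      rw [hπ2, hgm.ae_map_iff]
      exact ae_of_all _ fun x => ⟨x, rfl⟩
    have hback : (π.comap (Prod.map f g)).map (Prod.map f g) = π := by
      rw [hfg.map_comap]
      refine Measure.restrict_eq_self_of_ae_mem ?_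
      filter_upwards [hae1, hae2] with p h1 h2
      rw [Set.range_prodMap]
      exact ⟨h1, h2⟩
    -- Pushforward along a measurable embedding is injective on measures.
    have hinj1 : (π.comap (Prod.map f g)).map Prod.fst = μ := by
      rw [← hfm.comap_map ((π.comap (Prod.map f g)).map Prod.fst), ← hfm.comap_map μ,
        Measure.map_map hfm.measurable measurable_fst, ← hπ1]
      nth_rewrite 2 [← hback]
      rw [Measure.map_map measurable_fst hfg.measurable]
      rfl
    have hinj2 : (π.comap (Prod.map f g)).map Prod.snd = ν := by
      rw [← hgm.comap_map ((π.comap (Prod.map f g)).map Prod.snd), ← hgm.comap_map ν,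
        Measure.map_map hgm.measurable measurable_snd, ← hπ2]
      nth_rewrite 2 [← hback]
      rw [Measure.map_map measurable_snd hfg.measurable]
      rfl
    exact ⟨⟨π.comap (Prod.map f g), hinj1, hinj2⟩, Subtype.ext hback⟩
  · intro γ
    exact hfg.integral_map _

theorem stmt2
    {X₁ X₂ Z : Type*} [MetricSpace X₁] [CompactSpace X₁] [MetricSpace X₂] [CompactSpace X₂]
    [MetricSpace Z] [CompactSpace Z]
    [MeasurableSpace X₁] [BorelSpace X₁] [MeasurableSpace X₂] [BorelSpace X₂]
    [MeasurableSpace Z] [BorelSpace Z]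
    (ξ₁ : Measure X₁) (ξ₂ : Measure X₂) [IsProbabilityMeasure ξ₁] [IsProbabilityMeasure ξ₂]
    (h₁ : ∃ f : msupport ξ₁ → Z, Isometry f) (h₂ : ∃ f : msupport ξ₂ → Z, Isometry f) :
    ∃ (I₁ : {f : msupport ξ₁ → Z // Isometry f}) (I₂ : {f : msupport ξ₂ → Z // Isometry f}),
      W2 (pushSupp ξ₁ I₁.1) (pushSupp ξ₂ I₂.1)
        = ⨅ (J₁ : {f : msupport ξ₁ → Z // Isometry f})
            (J₂ : {f : msupport ξ₂ → Z // Isometry f}),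
            W2 (pushSupp ξ₁ J₁.1) (pushSupp ξ₂ J₂.1) := by 
  have : CompactSpace (msupport ξ₁) := isCompact_iff_compactSpace.mp (isClosed_msupport ξ₁).isCompact
  have : CompactSpace (msupport ξ₂) := isCompact_iff_compactSpace.mp (isClosed_msupport ξ₂).isCompact
  set μ : Measure (msupport ξ₁) := Measure.comap Subtype.val ξ₁ with hμ
  set ν : Measure (msupport ξ₂) := Measure.comap Subtype.val ξ₂ with hν
  have hemb : MeasurableEmbedding (Subtype.val : msupport ξ₁ → X₁) :=
    MeasurableEmbedding.subtype_coe (isClosed_msupport ξ₁).measurableSet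
  have hfin : IsFiniteMeasure μ := ⟨by
    rw [hμ, hemb.comap_apply]
    exact measure_lt_top _ _⟩
  have hW : ∀ (J₁ : {f : msupport ξ₁ → Z // Isometry f}) (J₂ : {f : msupport ξ₂ → Z // Isometry f}),
      W2 (pushSupp ξ₁ J₁.1) (pushSupp ξ₂ J₂.1) = Real.sqrt
        (pullCost μ ν (⟨J₁.1, J₁.2.continuous⟩, ⟨J₂.1, J₂.2.continuous⟩)) := fun J₁ J₂ =>
    congrArg Real.sqrt (W2sq_map_eq μ ν ⟨J₁.1, J₁.2.continuous⟩ ⟨J₂.1, J₂.2.continuous⟩ J₁.2 J₂.2)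
  obtain ⟨f₁, hf₁⟩ := h₁
  obtain ⟨f₂, hf₂⟩ := h₂
  obtain ⟨⟨g₁, g₂⟩, ⟨hg₁, hg₂⟩, hmin⟩ :=
    ((isCompact_isometries (K := msupport ξ₁) (Z := Z)).prod
      (isCompact_isometries (K := msupport ξ₂) (Z := Z))).exists_isMinOn
      ⟨(⟨f₁, hf₁.continuous⟩, ⟨f₂, hf₂.continuous⟩), hf₁, hf₂⟩
      (continuous_pullCost μ ν).continuousOn
  have hmin' : ∀ (J₁ : {f : msupport ξ₁ → Z // Isometry f})
      (J₂ : {f : msupport ξ₂ → Z // Isometry f}),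
      W2 (pushSupp ξ₁ g₁) (pushSupp ξ₂ g₂) ≤ W2 (pushSupp ξ₁ J₁.1) (pushSupp ξ₂ J₂.1) := by
    intro J₁ J₂
    rw [hW J₁ J₂, hW ⟨g₁, hg₁⟩ ⟨g₂, hg₂⟩]
    exact Real.sqrt_le_sqrt (isMinOn_iff.mp hmin
      (⟨J₁.1, J₁.2.continuous⟩, ⟨J₂.1, J₂.2.continuous⟩) ⟨J₁.2, J₂.2⟩)
  have : Nonempty {f : msupport ξ₁ → Z // Isometry f} := ⟨⟨f₁, hf₁⟩⟩
  have : Nonempty {f : msupport ξ₂ → Z // Isometry f} := ⟨⟨f₂, hf₂⟩⟩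
  refine ⟨⟨g₁, hg₁⟩, ⟨g₂, hg₂⟩, le_antisymm (le_ciInf fun J₁ => le_ciInf fun J₂ => hmin' J₁ J₂) ?_⟩
  refine (ciInf_le ⟨W2 (pushSupp ξ₁ g₁) (pushSupp ξ₂ g₂), ?_⟩ ⟨g₁, hg₁⟩).trans
    (ciInf_le (ι := {f : msupport ξ₂ → Z // Isometry f})
      ⟨W2 (pushSupp ξ₁ g₁) (pushSupp ξ₂ g₂), ?_⟩ ⟨g₂, hg₂⟩)
  · rintro _ ⟨J₁, rfl⟩
    exact le_ciInf fun J₂ => hmin' J₁ J₂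
  · rintro _ ⟨J₂, rfl⟩
    exact hmin' ⟨g₁, hg₁⟩ J₂
end
end

section
/- Let 𝕏_i = (X_i, d_{X_i}, ξ_i), i = 1, 2, be mm-spaces and let (Z, d_Z) be a compact metric space such that for each i there exists an isometric embedding of supp ξ_i into Z. Let (λ_n)_{n ∈ ℕ} be a sequence with λ_n → ∞ and for each n let π_n be a minimizer of EW_{λ_n}(𝕏₁, 𝕏₂). Then GW(𝕏_i, (Z, d_Z, P_{i,#}π_n)) → 0 as n → ∞ for i = 1, 2. -/
/-!
Push each `ξᵢ` forward along the given isometry `msupport ξᵢ → Z` to get a probability measure `νᵢ`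
on `Z` (`isProbabilityMeasure_pushSupp`). The graph coupling shows that the Gromov–Wasserstein
distance between `ξᵢ` and `νᵢ` vanishes (`GWsq_pushSupp`), so for every `λ` the competitor
`ν₁ ⊗ ν₂` has the same `EW_λ` objective `C = ∫ d² d(ν₁ ⊗ ν₂)`. Minimality of `π n` therefore gives
`λₙ (GW²₁ + GW²₂) ≤ C`, with both `GW²` terms nonnegative, and `C / λₙ → 0`.
-/

open MeasureTheory Filter Topology

noncomputable section

lemma GWsq_nonneg {X Y : Type*} [MetricSpace X] [MetricSpace Y]
    [MeasurableSpace X] [MeasurableSpace Y] (ξ : Measure X) (ν : Measure Y) : 0 ≤ GWsq ξ ν :=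
  Real.iInf_nonneg fun _ => integral_nonneg fun _ => sq_nonneg _

section Push

variable {X Z : Type*} [MetricSpace X] [CompactSpace X] [MeasurableSpace X] [BorelSpace X]
  [MetricSpace Z] [CompactSpace Z] [MeasurableSpace Z] [BorelSpace Z]

lemma msupport_eq_support (ξ : Measure X) : msupport ξ = ξ.support := by
  ext x
  rw [Measure.mem_support_iff_forall]
  constructor
  · intro h U hU
    obtain ⟨V, hVU, hV, hx⟩ := mem_nhds_iff.1 hU
    exact (h V hV hx).trans_le (measure_mono hVU)
  · intro h U hU hx
    exact h U (hU.mem_nhds hx)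

lemma measurableSet_msupport (ξ : Measure X) : MeasurableSet (msupport ξ) := by
  rw [msupport_eq_support]
  exact Measure.isClosed_support.measurableSet

/-- A compact metric space is second countable, so the complement of the support is null. -/
lemma measure_compl_msupport (ξ : Measure X) : ξ (msupport ξ)ᶜ = 0 := by
  rw [msupport_eq_support]
  exact Measure.measure_compl_support

lemma map_val_comap_msupport (ξ : Measure X) :
    (Measure.comap (Subtype.val : msupport ξ → X) ξ).map Subtype.val = ξ := by
  rw [map_comap_subtype_coe (measurableSet_msupport ξ)]
  exact Measure.restrict_eq_self_of_ae_mem (measure_compl_msupport ξ)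

instance isProbabilityMeasure_comap_msupport (ξ : Measure X) [IsProbabilityMeasure ξ] :
    IsProbabilityMeasure (Measure.comap (Subtype.val : msupport ξ → X) ξ) := by
  constructor
  have h : ((Measure.comap (Subtype.val : msupport ξ → X) ξ).map Subtype.val) Set.univ = 1 := by
    rw [map_val_comap_msupport]
    exact measure_univ
  rwa [Measure.map_apply measurable_subtype_coe MeasurableSet.univ, Set.preimage_univ] at h

lemma isProbabilityMeasure_pushSupp (ξ : Measure X) [IsProbabilityMeasure ξ]
    {f : msupport ξ → Z} (hf : Isometry f) : IsProbabilityMeasure (pushSupp ξ f) :=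
  Measure.isProbabilityMeasure_map hf.continuous.measurable.aemeasurable

/-- The coupling `(id, f)_# ξ` is concentrated on the graph of an isometry, so its distortion
vanishes. -/
lemma GWsq_pushSupp (ξ : Measure X) [IsProbabilityMeasure ξ]
    {f : msupport ξ → Z} (hf : Isometry f) : GWsq ξ (pushSupp ξ f) = 0 := by
  set m := Measure.comap (Subtype.val : msupport ξ → X) ξ with hm
  let g : msupport ξ → X × Z := fun s => (s.1, f s)
  have hg : Measurable g := measurable_subtype_coe.prodMk hf.continuous.measurable
  have hmem : m.map g ∈ couplings ξ (pushSupp ξ f) := by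
    constructor
    · rw [Measure.map_map measurable_fst hg]
      exact map_val_comap_msupport ξ
    · rw [Measure.map_map measurable_snd hg]
      rfl
  have hobj : GWobj (m.map g) = 0 := by
    unfold GWobj
    rw [Measure.map_prod_map m m hg hg, integral_map (hg.prodMap hg).aemeasurable]
    · simp [g, hf.dist_eq, Subtype.dist_eq]
    · exact Continuous.aestronglyMeasurable (by fun_prop)
  refine le_antisymm ?_ (GWsq_nonneg _ _)
  rw [← hobj]
  exact ciInf_le ⟨0, by rintro _ ⟨γ, rfl⟩; exact integral_nonneg fun _ => sq_nonneg _⟩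
    (⟨m.map g, hmem⟩ : couplings ξ (pushSupp ξ f))

end Push

theorem stmt10
    {X₁ X₂ Z : Type*} [MetricSpace X₁] [CompactSpace X₁] [MetricSpace X₂] [CompactSpace X₂]
    [MetricSpace Z] [CompactSpace Z]
    [MeasurableSpace X₁] [BorelSpace X₁] [MeasurableSpace X₂] [BorelSpace X₂]
    [MeasurableSpace Z] [BorelSpace Z]
    (ξ₁ : Measure X₁) (ξ₂ : Measure X₂) [IsProbabilityMeasure ξ₁] [IsProbabilityMeasure ξ₂]
    (h₁ : ∃ f : msupport ξ₁ → Z, Isometry f) (h₂ : ∃ f : msupport ξ₂ → Z, Isometry f)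
    (lam : ℕ → ℝ) (hpos : ∀ n, 0 < lam n) (hlam : Tendsto lam atTop atTop)
    (π : ℕ → Measure (Z × Z)) (hprob : ∀ n, IsProbabilityMeasure (π n))
    (hmin : ∀ n, EWobj (lam n) ξ₁ ξ₂ (π n) = EWlamSq Z (lam n) ξ₁ ξ₂) :
    Tendsto (fun n => Real.sqrt (GWsq ξ₁ ((π n).map Prod.fst))) atTop (nhds 0)
      ∧ Tendsto (fun n => Real.sqrt (GWsq ξ₂ ((π n).map Prod.snd))) atTop (nhds 0) := by
  obtain ⟨f₁, hf₁⟩ := h₁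
  obtain ⟨f₂, hf₂⟩ := h₂
  have := isProbabilityMeasure_pushSupp ξ₁ hf₁
  have := isProbabilityMeasure_pushSupp ξ₂ hf₂
  set ρ := (pushSupp ξ₁ f₁).prod (pushSupp ξ₂ f₂) with hρ
  set C := ∫ p : Z × Z, dist p.1 p.2 ^ 2 ∂ρ with hC
  have hcost : ∀ μ : Measure (Z × Z), 0 ≤ ∫ p : Z × Z, dist p.1 p.2 ^ 2 ∂μ :=
    fun μ => integral_nonneg fun _ => sq_nonneg _
  have hρobj : ∀ l : ℝ, EWobj l ξ₁ ξ₂ ρ = C := by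
    intro l
    have e₁ : ρ.map Prod.fst = pushSupp ξ₁ f₁ := by simp [hρ]
    have e₂ : ρ.map Prod.snd = pushSupp ξ₂ f₂ := by simp [hρ]
    rw [EWobj, e₁, e₂, GWsq_pushSupp ξ₁ hf₁, GWsq_pushSupp ξ₂ hf₂]
    simp [hC]
  have hbound : ∀ n, GWsq ξ₁ ((π n).map Prod.fst) + GWsq ξ₂ ((π n).map Prod.snd) ≤ C / lam n := by
    intro n
    have hle : EWobj (lam n) ξ₁ ξ₂ (π n) ≤ C := by
      rw [hmin n, ← hρobj (lam n)]
      refine ciInf_le ⟨0, ?_⟩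
        (⟨ρ, inferInstance⟩ : {μ : Measure (Z × Z) // IsProbabilityMeasure μ})
      rintro _ ⟨μ, rfl⟩
      exact add_nonneg (hcost _)
        (mul_nonneg (hpos n).le (add_nonneg (GWsq_nonneg _ _) (GWsq_nonneg _ _)))
    rw [le_div_iff₀ (hpos n)]
    unfold EWobj at hle
    linarith [hcost (π n)]
  have hlim : Tendsto (fun n => √(C / lam n)) atTop (nhds 0) := by
    simpa using (hlam.const_div_atTop C).sqrt
  constructor
  · refine squeeze_zero (fun _ => Real.sqrt_nonneg _) (fun n => Real.sqrt_le_sqrt ?_) hlim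
    linarith [hbound n, GWsq_nonneg ξ₂ ((π n).map Prod.snd)]
  · refine squeeze_zero (fun _ => Real.sqrt_nonneg _) (fun n => Real.sqrt_le_sqrt ?_) hlim
    linarith [hbound n, GWsq_nonneg ξ₁ ((π n).map Prod.fst)]
end
end
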